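/- arXiv:1906.03424 — 2 statements merged into one kernel-verified Lean document; each statement's English description precedes it below -/
import Mathlib

section
/- Let F₃ be the free group on three generators a, b, c. Define α : ℕ → F₃ constant equal to 1, and β : ℕ → F₃ by β d = c if d is even and β d = b if d is odd. For d : ℕ let B₃(2^d) := B_{β,α}[p] where p : Fin (2^d) → F₃ is the constant family with value b⁻¹ * a. Then B₃(2^d) ≠ 1 in F₃ for every d : ℕ. -/
/-!
Write `g d = B₃(2^d)`, so that `g (d+1) = [g d ^ β d, g d]`. The proof is an induction showing
`g d ≠ 1`, and it rests on the fact that centralizers of nontrivial elements of a free group are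
cyclic (`isCyclic_centralizer`): such a centralizer is a free group by Nielsen–Schreier, it has a
nontrivial center, and a free group with nontrivial center has at most one generator
(`subsingleton_of_central`).

Consequently commuting is transitive on nontrivial elements, and if `g ≠ 1` commutes with its
conjugate `g ^ h`, then `h` normalizes the centralizer `⟨z⟩` of `g`; as `⟨z⟩` is infinite cyclic,
`h` acts on it by `±1`, so `h²` commutes with `z`, and by transitivity so does `h`
(`commute_of_commute_conj`). Finally, an element which commutes with a generator `x` and has
exponent sum `0` in `x` is trivial (`eq_one_of_commute_of`). The exponent sum of `g d` in the
generator `β d` is always `0`: for `d = 0` because `c` does not occur in `b⁻¹ * a`, and for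
`d > 0` because `g d` is a commutator. Hence `g d ≠ 1` implies `g (d+1) ≠ 1`.
-/

set_option autoImplicit false

/-- Conjugation `g^h = h⁻¹ * g * h`. -/
def conj' {G : Type*} [Group G] (g h : G) : G := h⁻¹ * g * h

/-- Commutator `[x, y] = x⁻¹ * y⁻¹ * x * y`. -/
def comm' {G : Type*} [Group G] (x y : G) : G := x⁻¹ * y⁻¹ * x * y

/-- Balanced iterated commutator `B_{β,α}[p]`. -/
def balComm {G : Type*} [Group G] (β α : ℕ → G) : (d : ℕ) → (Fin (2 ^ d) → G) → G
  | 0, p => p ⟨0, by norm_num⟩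
  | d + 1, p =>
      comm'
        (conj' (balComm β α d fun i => p ⟨2 ^ d + i.1, by
          have h := i.2; simp only [pow_succ]; omega⟩) (β d))
        (conj' (balComm β α d fun i => p ⟨i.1, by
          have h := i.2; simp only [pow_succ]; omega⟩) (α d))

/-- Generator `a` of the free group `F₃`. -/
def fa : FreeGroup (Fin 3) := FreeGroup.of 0
/-- Generator `b` of the free group `F₃`. -/
def fb : FreeGroup (Fin 3) := FreeGroup.of 1
/-- Generator `c` of the free group `F₃`. -/
def fc : FreeGroup (Fin 3) := FreeGroup.of 2

/-- `β d = c` for even `d` and `β d = b` for odd `d`. -/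
def βF : ℕ → FreeGroup (Fin 3) := fun d => if Even d then fc else fb

/-- `B₃(2^d)`: the balanced iterated commutator of `2^d` copies of `b⁻¹ * a`. -/
def B3 (d : ℕ) : FreeGroup (Fin 3) :=
  balComm βF (fun _ => 1) d (fun _ => fb⁻¹ * fa)

/-- A free group with a nontrivial central element has at most one generator: if the reduced word
of `z` starts with the generator `x` (or its inverse) and `t ≠ x`, then `t * z` is reduced as
written, so `t * z = z * t` would force the word of `z` to start with `t`. -/
theorem subsingleton_of_central {X : Type*} (z : FreeGroup X) (hz : z ≠ 1)
    (hc : ∀ w, Commute w z) : Subsingleton X := by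
  classical
  have key : ∀ (x : X) (e : Bool) (l : List (X × Bool)), z.toWord = (x, e) :: l →
      ∀ t, t = x := by
    intro x e l hl t
    by_contra hne
    have hred : FreeGroup.IsReduced ((t, true) :: z.toWord) := by
      rw [hl, FreeGroup.isReduced_cons_cons]
      exact ⟨fun h => absurd h hne, hl ▸ FreeGroup.isReduced_toWord⟩
    have h1 : (FreeGroup.of t * z).toWord = (t, true) :: z.toWord := by
      rw [FreeGroup.toWord_mul, FreeGroup.toWord_of]
      exact hred.reduce_eq
    have h2 := FreeGroup.toWord_mul_sublist z (FreeGroup.of t)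
    rw [← (hc (FreeGroup.of t)).eq, h1, FreeGroup.toWord_of] at h2
    have h3 := h2.eq_of_length (by simp)
    rw [hl] at h3
    simp only [List.cons_append, List.cons.injEq, Prod.mk.injEq] at h3
    exact hne h3.1.1
  rcases hl : z.toWord with _ | ⟨⟨x, e⟩, l⟩
  · exact absurd (FreeGroup.toWord_eq_nil_iff.1 hl) hz
  · exact ⟨fun s t => (key x e l hl s).trans (key x e l hl t).symm⟩

theorem isCyclic_centralizer {X : Type*} (g : FreeGroup X) (hg : g ≠ 1) :
    ∃ z, Commute z g ∧ ∀ w, Commute w g → ∃ n : ℤ, z ^ n = w := by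
  set C := Subgroup.centralizer {g} with hC
  have mem : ∀ w, w ∈ C ↔ Commute w g := fun w => by
    rw [hC, Subgroup.mem_centralizer_singleton_iff]; rfl
  let e := IsFreeGroup.toFreeGroup C
  let g' : C := ⟨g, (mem g).2 (Commute.refl g)⟩
  have hg' : e g' ≠ 1 := by
    intro h
    exact hg (congrArg Subtype.val ((map_eq_one_iff e e.injective).1 h))
  have hsub : Subsingleton (IsFreeGroup.Generators C) := by
    refine subsingleton_of_central (e g') hg' fun w => ?_
    have h : Commute (e.symm w) g' := Subtype.ext ((mem _).1 (e.symm w).2)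
    simpa using h.map e
  have hne : Nonempty (IsFreeGroup.Generators C) := by
    by_contra hempty
    rw [not_nonempty_iff] at hempty
    exact hg' (Subsingleton.elim _ _)
  obtain ⟨x⟩ := hne
  have : Unique (IsFreeGroup.Generators C) := ⟨⟨x⟩, fun _ => Subsingleton.elim _ _⟩
  obtain ⟨y, hy⟩ := IsCyclic.exists_generator (α := FreeGroup (IsFreeGroup.Generators C))
  refine ⟨(e.symm y : C), (mem _).1 (e.symm y).2, fun w hw => ?_⟩
  obtain ⟨n, hn⟩ := hy (e ⟨w, (mem w).2 hw⟩)
  refine ⟨n, ?_⟩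
  have h : e.symm y ^ n = ⟨w, (mem w).2 hw⟩ := by
    rw [← map_zpow, e.symm_apply_eq]; exact hn
  exact congrArg Subtype.val h

/-- Commuting is transitive through a nontrivial element of a free group. -/
theorem commute_trans {X : Type*} {g u v : FreeGroup X} (hg : g ≠ 1)
    (hu : Commute u g) (hv : Commute v g) : Commute u v := by
  obtain ⟨z, -, hz⟩ := isCyclic_centralizer g hg
  obtain ⟨m, rfl⟩ := hz u hu
  obtain ⟨n, rfl⟩ := hz v hv
  exact (Commute.refl z).zpow_zpow m n

theorem commute_of_commute_conj {X : Type*} {g h : FreeGroup X}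
    (hgh : Commute (h⁻¹ * g * h) g) : Commute h g := by
  by_cases hg : g = 1
  · exact hg ▸ Commute.one_right h
  by_cases hh : h = 1
  · exact hh ▸ Commute.one_left g
  set k := h⁻¹ * g * h with hk
  have hk1 : k ≠ 1 := by
    intro h1
    apply hg
    have : g = h * k * h⁻¹ := by rw [hk]; group
    rw [this, h1]; group
  obtain ⟨z, hzg, hz⟩ := isCyclic_centralizer g hg
  have hz1 : z ≠ 1 := by
    rintro rfl
    obtain ⟨n, hn⟩ := hz g (Commute.refl g)
    exact hg (by rw [← hn, one_zpow])
  have hzk : Commute z k := commute_trans hg hzg hgh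
  -- Both conjugates of `z` by `h` lie in the centralizer `⟨z⟩` of `g`.
  have c1 : Commute (h * z * h⁻¹) g := by
    have := hzk.map (MulAut.conj h).toMonoidHom
    have e : (MulAut.conj h) k = g := by rw [MulAut.conj_apply, hk]; group
    simpa [e] using this
  have c2 : Commute (h⁻¹ * z * h) g := by
    refine commute_trans hk1 ?_ hgh.symm
    have := hzg.map (MulAut.conj h⁻¹).toMonoidHom
    simpa [hk] using this
  obtain ⟨m, hm⟩ := hz _ c1
  obtain ⟨n, hn⟩ := hz _ c2
  have hmul : z ^ (m * n) = z ^ (1 : ℤ) := by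
    rw [zpow_mul, hm, conj_zpow, hn]; group
  have hmn : m * n = 1 := injective_zpow_iff_not_isOfFinOrder.2
    (not_isOfFinOrder_of_isMulTorsionFree hz1) hmul
  have hmm : m * m = 1 := by
    rcases Int.eq_one_or_neg_one_of_mul_eq_one hmn with rfl | rfl <;> norm_num
  have hsq : Commute (h ^ 2) z := by
    have h1 : z ^ (m * m) = h * (h * z * h⁻¹) * h⁻¹ := by
      rw [zpow_mul, hm, conj_zpow, hm]
    rw [hmm, zpow_one] at h1
    change h ^ 2 * z = z * h ^ 2
    conv_rhs => rw [h1]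
    simp [pow_two, mul_assoc]
  have hh2 : h ^ 2 ≠ 1 := fun h2 => hh ((pow_eq_one_iff_left (by norm_num)).1 h2)
  have hhz : Commute h z := commute_trans hh2 ((Commute.refl h).pow_right 2) hsq.symm
  exact commute_trans hz1 hhz hzg.symm

/-- The exponent sum of the generator `x`, as a homomorphism to `ℤ` written multiplicatively. -/
def expSum {X : Type*} [DecidableEq X] (x : X) : FreeGroup X →* Multiplicative ℤ :=
  FreeGroup.lift fun y => if y = x then Multiplicative.ofAdd 1 else 1

theorem eq_one_of_commute_of {X : Type*} [DecidableEq X] {g : FreeGroup X} {x : X}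
    (hc : Commute (FreeGroup.of x) g) (h0 : expSum x g = 1) : g = 1 := by
  obtain ⟨z, -, hz⟩ := isCyclic_centralizer (FreeGroup.of x) (FreeGroup.of_ne_one x)
  obtain ⟨m, hm⟩ := hz _ (Commute.refl _)
  obtain ⟨n, rfl⟩ := hz g hc.symm
  have hx : expSum x (FreeGroup.of x) ≠ 1 := by
    simp [expSum]
  have hzx : expSum x z ≠ 1 := by
    intro h
    apply hx
    rw [← hm, map_zpow, h, one_zpow]
  rw [map_zpow] at h0
  rcases (IsMulTorsionFree.zpow_eq_one_iff_right hzx).1 h0 with rfl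
  exact zpow_zero z

theorem B3_succ (d : ℕ) : B3 (d + 1) = comm' (conj' (B3 d) (βF d)) (B3 d) := by
  change comm' (conj' (B3 d) (βF d)) (conj' (B3 d) 1) = _
  simp [conj']

theorem expSum_B3_succ (x : Fin 3) (d : ℕ) : expSum x (B3 (d + 1)) = 1 := by
  rw [B3_succ, comm']
  simp only [map_mul, map_inv]
  rw [mul_comm (_)⁻¹, mul_assoc (_)⁻¹, mul_comm (_)⁻¹]
  group

/-- The generator of index `betaIdx d` is `βF d`. -/
def betaIdx (d : ℕ) : Fin 3 := if Even d then 2 else 1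

theorem of_betaIdx (d : ℕ) : FreeGroup.of (betaIdx d) = βF d := by
  unfold betaIdx βF fc fb
  split_ifs <;> rfl

theorem expSum_B3 (d : ℕ) : expSum (betaIdx d) (B3 d) = 1 := by
  cases d with
  | zero => simp [B3, balComm, betaIdx, expSum, fa, fb]
  | succ d => exact expSum_B3_succ _ d

theorem stmt_7 (d : ℕ) : B3 d ≠ 1 := by
  induction d with
  | zero =>
    intro h
    have := congrArg (expSum (0 : Fin 3)) h
    simp [B3, balComm, expSum, fa, fb] at this
  | succ d ih =>
    intro h
    apply ih
    rw [B3_succ, comm'] at h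
    have hc : Commute (conj' (B3 d) (βF d)) (B3 d) := by
      have h' : ∀ x y : FreeGroup (Fin 3), x⁻¹ * y⁻¹ * x * y = 1 → Commute x y := by
        intro x y hxy
        have : x * y = y * x * (x⁻¹ * y⁻¹ * x * y) := by group
        rw [hxy, mul_one] at this
        exact this
      exact h' _ _ h
    exact eq_one_of_commute_of (of_betaIdx d ▸ commute_of_commute_conj hc) (expSum_B3 d)
end

section
/- Let F₃ be the free group on three generators a, b, c. Define α : ℕ → F₃ constant equal to 1, and β : ℕ → F₃ by β d = c if d is even and β d = b if d is odd. Let d : ℕ and let p : Fin (2^d) → F₃ be any family such that, for every i, the reduced word of p i is nonempty, begins with the letter b⁻¹ and ends with the letter a. Then the reduced word of B_{β,α}[p] is nonempty, begins with b⁻¹ if d is even and with c⁻¹ if d is odd, and ends with a; in particular B_{β,α}[p] ≠ 1 in F₃. -/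
/-!
Write `U`, `L` for the commutators of the upper and lower halves and `z = β d`. Since `α = 1`,

  `B = z⁻¹ * U⁻¹ * z * L⁻¹ * z⁻¹ * U * z * L`.

By induction `U` and `L` start with `s⁻¹` and end with `a`, where `s = b`, `z = c` for even `d` and
`s = c`, `z = b` for odd `d`. As `a`, `s`, `z` are distinct generators, no cancellation occurs at
any of the seven junctions, so the reduced word of `B` is the concatenation of those of the factors:
it starts with `z⁻¹` and ends with the last letter `a` of `L`. The absence of cancellation is
`HasEnds.mul`, and the induction step is `HasEnds.comm_conj`.
-/

set_option autoImplicit false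

/-- The reduced word of `x` is nonempty, with first letter `s` and last letter `t`. -/
def HasEnds (x : FreeGroup (Fin 3)) (s t : Fin 3 × Bool) : Prop :=
  x.toWord.head? = some s ∧ x.toWord.getLast? = some t

theorem HasEnds.mul {x y : FreeGroup (Fin 3)} {s t s' t' : Fin 3 × Bool}
    (hx : HasEnds x s t) (hy : HasEnds y s' t') (h : t.1 ≠ s'.1) : HasEnds (x * y) s t' := by
  have hred : FreeGroup.IsReduced (x.toWord ++ y.toWord) := by
    refine List.isChain_append.mpr
      ⟨FreeGroup.isReduced_toWord, FreeGroup.isReduced_toWord, ?_⟩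
    intro u hu v hv huv
    rw [hx.2, Option.mem_some_iff] at hu
    rw [hy.1, Option.mem_some_iff] at hv
    subst hu hv
    exact absurd huv h
  unfold HasEnds
  rw [FreeGroup.toWord_mul, hred.reduce_eq]
  simp [hx.1, hy.2, List.head?_append, List.getLast?_append]

theorem HasEnds.inv {x : FreeGroup (Fin 3)} {s t : Fin 3 × Bool} (hx : HasEnds x s t) :
    HasEnds x⁻¹ (t.1, !t.2) (s.1, !s.2) := by
  unfold HasEnds
  rw [FreeGroup.toWord_inv]
  simp [FreeGroup.invRev, hx.1, hx.2]

theorem hasEnds_of (i : Fin 3) : HasEnds (FreeGroup.of i) (i, true) (i, true) := by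
  simp [HasEnds]

/-- If `U` and `L` start with the inverse of the generator `j` and end with the generator `k`, and
the generator `i` differs from both, then `[U ^ i, L]` starts with the inverse of `i` and ends
with `k`. -/
theorem HasEnds.comm_conj {U L : FreeGroup (Fin 3)} {i j k : Fin 3}
    (hij : i ≠ j) (hik : i ≠ k)
    (hU : HasEnds U (j, false) (k, true)) (hL : HasEnds L (j, false) (k, true)) :
    HasEnds (comm' (conj' U (FreeGroup.of i)) (conj' L 1)) (i, false) (k, true) := by
  have hz := hasEnds_of i
  have e : comm' (conj' U (FreeGroup.of i)) (conj' L 1) =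
      (FreeGroup.of i)⁻¹ * U⁻¹ * FreeGroup.of i * L⁻¹ * (FreeGroup.of i)⁻¹ * U *
        FreeGroup.of i * L := by
    simp only [comm', conj']
    group
  rw [e]
  exact (((((((hz.inv.mul hU.inv hik).mul hz hij.symm).mul hL.inv hik).mul hz.inv
    hij.symm).mul hU hij).mul hz hik.symm).mul hL hij)

theorem hasEnds_balComm (d : ℕ) (p : Fin (2 ^ d) → FreeGroup (Fin 3))
    (hp : ∀ i, HasEnds (p i) (1, false) (0, true)) :
    HasEnds (balComm βF (fun _ => 1) d p) (if Even d then 1 else 2, false) (0, true) := by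
  induction d with
  | zero => exact hp _
  | succ d ih =>
    have hU := ih _ fun i : Fin (2 ^ d) =>
      hp ⟨2 ^ d + i.1, by have h := i.2; simp only [pow_succ]; omega⟩
    have hL := ih _ fun i : Fin (2 ^ d) =>
      hp ⟨i.1, by have h := i.2; simp only [pow_succ]; omega⟩
    rw [balComm]
    by_cases hd : Even d
    · simp only [hd, Nat.even_add_one, not_true_eq_false, if_true, if_false, βF, fc] at hU hL ⊢
      exact HasEnds.comm_conj (by decide) (by decide) hU hL
    · simp only [hd, Nat.even_add_one, not_false_eq_true, if_true, if_false, βF, fb] at hU hL ⊢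
      exact HasEnds.comm_conj (by decide) (by decide) hU hL

theorem stmt_8 (d : ℕ) (p : Fin (2 ^ d) → FreeGroup (Fin 3))
    (hp : ∀ i, (p i).toWord ≠ [] ∧
      (p i).toWord.head? = some ((1 : Fin 3), false) ∧
      (p i).toWord.getLast? = some ((0 : Fin 3), true)) :
    ((balComm βF (fun _ => 1) d p).toWord ≠ [] ∧
      (balComm βF (fun _ => 1) d p).toWord.head? =
        some (if Even d then ((1 : Fin 3), false) else ((2 : Fin 3), false)) ∧
      (balComm βF (fun _ => 1) d p).toWord.getLast? = some ((0 : Fin 3), true)) ∧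
    balComm βF (fun _ => 1) d p ≠ 1 := by
  obtain ⟨h1, h2⟩ := hasEnds_balComm d p fun i => (hp i).2
  have hne : (balComm βF (fun _ => 1) d p).toWord ≠ [] := by
    intro h
    simp [h] at h2
  refine ⟨⟨hne, ?_, h2⟩, fun h => hne (FreeGroup.toWord_eq_nil_iff.mpr h)⟩
  rw [h1]
  split_ifs <;> rfl
end
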